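/- Let n ≥ 3 be an odd natural number. The number of functions σ : (ZMod n) × Bool → ZMod 3, with all values in {1, 2} ⊆ ZMod 3, satisfying σ(i,false) + σ(i,true) + σ(i+1,true) + σ(i+1,false) = 0 for every i ∈ ZMod n, together with Σ_{i} σ(i,false) = 0 and Σ_{i} σ(i,true) = 0, equals (2^n − 2)/3. -/

import Mathlib

/-! The sum of the two values on a rung changes sign from each rung to the next, by the
quadrilateral equations. Going once around an odd ladder shows that it is its own negative, hence
zero: the two rails are negatives of each other. A Heawood vector is therefore the same thing as
a nowhere-zero vector on one rail with sum zero. If `a m` denotes the number of such vectors of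
length `m` with entries in a group of order `q`, then `a (m + 1) + a m = (q - 1) ^ m`, as the last
entry is determined by the others and is nonzero exactly when their sum is. -/

section NowhereZero

/-- The nowhere-zero vectors with entries in `G` indexed by `ι` whose entries sum to zero. -/
def nowhereZeroZeroSum (ι G : Type*) [Fintype ι] [AddCommGroup G] : Set (ι → G) :=
  {f | (∀ i, f i ≠ 0) ∧ ∑ i, f i = 0}

variable {ι κ G : Type*} [Fintype ι] [Fintype κ] [AddCommGroup G]

theorem ncard_nowhereZero [Finite G] :
    {f : ι → G | ∀ i, f i ≠ 0}.ncard = (Nat.card G - 1) ^ Fintype.card ι := by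
  calc {f : ι → G | ∀ i, f i ≠ 0}.ncard
      = Nat.card (ι → {x : G // x ≠ 0}) :=
        Nat.card_congr (Equiv.subtypePiEquivPi (p := fun _ x => x ≠ 0))
    _ = ({0}ᶜ : Set G).ncard ^ Fintype.card ι := by
        rw [Nat.card_fun, Nat.card_eq_fintype_card (α := ι)]; rfl
    _ = (Nat.card G - 1) ^ Fintype.card ι := by rw [Set.ncard_compl, Set.ncard_singleton]

theorem ncard_nowhereZeroZeroSum_congr (e : ι ≃ κ) :
    (nowhereZeroZeroSum ι G).ncard = (nowhereZeroZeroSum κ G).ncard :=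
  Nat.card_congr <| (e.arrowCongr (Equiv.refl G)).subtypeEquiv fun f => by
    simp [nowhereZeroZeroSum, e.symm.forall_congr_left, e.symm.sum_comp f]

theorem apply_none_of_mem_nowhereZeroZeroSum {f : Option ι → G}
    (hf : f ∈ nowhereZeroZeroSum (Option ι) G) : f none = -∑ i, f (some i) :=
  eq_neg_of_add_eq_zero_left (by simpa only [Fintype.sum_option] using hf.2)

/-- Nowhere-zero vectors over `Option ι` with sum zero correspond to nowhere-zero vectors over `ι`
with nonzero sum, by dropping the entry at `none`. -/
def nowhereZeroZeroSumOptionEquiv :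
    nowhereZeroZeroSum (Option ι) G ≃
      ({f | ∀ i, f i ≠ 0} \ {f | ∑ i, f i = 0} : Set (ι → G)) where
  toFun f := ⟨f.1 ∘ some, fun i => f.2.1 (some i), fun hsum =>
    f.2.1 none ((apply_none_of_mem_nowhereZeroZeroSum f.2).trans (neg_eq_zero.2 hsum))⟩
  invFun g := ⟨fun o => o.elim (-∑ i, g.1 i) g.1,
    Option.forall.2 ⟨neg_ne_zero.2 g.2.2, g.2.1⟩, by simp [Fintype.sum_option]⟩
  left_inv f := by
    ext (_ | i)
    · exact (apply_none_of_mem_nowhereZeroZeroSum f.2).symm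
    · rfl
  right_inv _ := rfl

theorem ncard_nowhereZeroZeroSum_option_add [Finite G] :
    (nowhereZeroZeroSum (Option ι) G).ncard + (nowhereZeroZeroSum ι G).ncard =
      (Nat.card G - 1) ^ Fintype.card ι := by
  have hdrop : (nowhereZeroZeroSum (Option ι) G).ncard =
      ({f | ∀ i, f i ≠ 0} \ {f | ∑ i, f i = 0} : Set (ι → G)).ncard :=
    Nat.card_congr nowhereZeroZeroSumOptionEquiv
  rw [hdrop, add_comm, ← ncard_nowhereZero]
  exact Set.ncard_inter_add_ncard_sdiff_eq_ncard _ _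

theorem card_mul_ncard_nowhereZeroZeroSum (ι G : Type*) [Fintype ι] [AddCommGroup G] [Finite G] :
    (Nat.card G : ℤ) * (nowhereZeroZeroSum ι G).ncard =
      (Nat.card G - 1) ^ Fintype.card ι + (Nat.card G - 1) * (-1) ^ Fintype.card ι := by
  refine Fintype.induction_empty_option
    (P := fun α _ => (Nat.card G : ℤ) * (nowhereZeroZeroSum α G).ncard =
      (Nat.card G - 1) ^ Fintype.card α + (Nat.card G - 1) * (-1) ^ Fintype.card α)
    (fun α β _ e ih => ?of_equiv) ?empty (fun α _ ih => ?option) ι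
  case of_equiv =>
    let := Fintype.ofEquiv β e.symm
    rwa [← ncard_nowhereZeroZeroSum_congr e, ← Fintype.card_congr e]
  case empty => simp [nowhereZeroZeroSum]
  case option =>
    have hrec := congrArg (Nat.cast : ℕ → ℤ) (ncard_nowhereZeroZeroSum_option_add (ι := α) (G := G))
    push_cast [Nat.cast_pred (Nat.card_pos (α := G))] at hrec
    rw [Fintype.card_option, pow_succ, pow_succ]
    linear_combination (Nat.card G : ℤ) * hrec - ih

end NowhereZero

theorem antiperiodic_eq_neg_self {α β : Type*} [AddMonoid α] [InvolutiveNeg β] {f : α → β}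
    {c : α} {n : ℕ} (hf : Function.Antiperiodic f c) (hn : Odd n) (hc : n • c = 0) (x : α) :
    f x = -f x := by
  obtain ⟨k, rfl⟩ := hn
  simpa [hc] using hf.odd_nsmul_antiperiodic k x

theorem eq_zero_of_eq_neg_self {G : Type*} [AddGroup G] (hG : Odd (Nat.card G)) {x : G}
    (hx : x = -x) : x = 0 :=
  (Nat.Coprime.nsmul_right_bijective hG.coprime_two_right).injective <| by
    simpa [two_nsmul] using eq_neg_iff_add_eq_zero.1 hx

section Heawood

variable {n : ℕ} [NeZero n] {G : Type*} [AddCommGroup G]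

/-- Heawood vectors of the circular ladder graph `CL_n` with entries in an abelian group `G`:
nowhere-zero labellings of the vertices whose sum over each face is zero. For `G = ZMod 3`
these are the usual Heawood vectors. The Boolean coordinate of a vertex tells on which of the two
`n`-gons, called rails, it lies. -/
structure IsHeawoodVector (σ : ZMod n × Bool → G) : Prop where
  ne_zero : ∀ v, σ v ≠ 0
  quadrilateral : ∀ i, σ (i, false) + σ (i, true) + σ (i + 1, true) + σ (i + 1, false) = 0
  sum_rail_false : ∑ i, σ (i, false) = 0
  sum_rail_true : ∑ i, σ (i, true) = 0

theorem isHeawoodVector_zmod_three_iff {σ : ZMod n × Bool → ZMod 3} :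
    IsHeawoodVector σ ↔
      (∀ v, σ v = 1 ∨ σ v = 2) ∧
      (∀ i : ZMod n,
        σ (i, false) + σ (i, true) + σ (i + 1, true) + σ (i + 1, false) = 0) ∧
      (∑ i : ZMod n, σ (i, false)) = 0 ∧ (∑ i : ZMod n, σ (i, true)) = 0 := by
  have ne_zero_iff : ∀ x : ZMod 3, x ≠ 0 ↔ x = 1 ∨ x = 2 := by decide
  simp only [← ne_zero_iff]
  constructor <;> exact fun ⟨hne, hquad, hfalse, htrue⟩ => ⟨hne, hquad, hfalse, htrue⟩

/-- The labelling of the ladder over `ι` that is `f` on one rail and `-f` on the other. -/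
def oppositeRails {ι : Type*} {G : Type*} [Neg G] (f : ι → G) (v : ι × Bool) : G :=
  bif v.2 then -f v.1 else f v.1

theorem isHeawoodVector_oppositeRails {f : ZMod n → G} (hf : f ∈ nowhereZeroZeroSum (ZMod n) G) :
    IsHeawoodVector (oppositeRails f) := by
  obtain ⟨hne, hsum⟩ := hf
  refine ⟨?_, fun i => ?_, ?_, ?_⟩
  · rintro ⟨i, _ | _⟩ <;> simp [oppositeRails, hne i]
  · simp [oppositeRails]
  · exact hsum
  · simpa [oppositeRails] using hsum

namespace IsHeawoodVector

variable {σ : ZMod n × Bool → G}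

theorem antiperiodic_rung (hσ : IsHeawoodVector σ) :
    Function.Antiperiodic (fun i => σ (i, false) + σ (i, true)) 1 := fun i =>
  eq_neg_of_add_eq_zero_right <| by
    simpa only [add_assoc, add_comm (σ (i + 1, true))] using hσ.quadrilateral i

theorem eq_oppositeRails (hσ : IsHeawoodVector σ) (hn : Odd n) (hG : Odd (Nat.card G)) :
    σ = oppositeRails fun i => σ (i, false) := by
  have hrung (i : ZMod n) : σ (i, false) + σ (i, true) = 0 :=
    eq_zero_of_eq_neg_self hG (antiperiodic_eq_neg_self hσ.antiperiodic_rung hn (by simp) i)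
  ext ⟨i, _ | _⟩
  · rfl
  · exact eq_neg_of_add_eq_zero_right (hrung i)

/-- Restriction of a Heawood vector to the rail `false`. -/
def railEquiv (hn : Odd n) (hG : Odd (Nat.card G)) :
    {σ : ZMod n × Bool → G // IsHeawoodVector σ} ≃ nowhereZeroZeroSum (ZMod n) G where
  toFun σ := ⟨fun i => σ.1 (i, false), fun i => σ.2.ne_zero (i, false), σ.2.sum_rail_false⟩
  invFun f := ⟨oppositeRails f.1, isHeawoodVector_oppositeRails f.2⟩
  left_inv σ := Subtype.ext (σ.2.eq_oppositeRails hn hG).symm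
  right_inv _ := rfl

end IsHeawoodVector

theorem card_heawood_circularLadder_odd_general (hn : Odd n) (hG : Odd (Nat.card G)) :
    Nat.card {σ : ZMod n × Bool → G // IsHeawoodVector σ} =
      ((Nat.card G - 1) ^ n - (Nat.card G - 1)) / Nat.card G := by
  have : Finite G := Nat.finite_of_card_ne_zero hG.pos.ne'
  have hcount := card_mul_ncard_nowhereZeroZeroSum (ZMod n) G
  rw [ZMod.card, hn.neg_one_pow, mul_neg_one, ← Nat.cast_pred hG.pos] at hcount
  rw [Nat.card_congr (IsHeawoodVector.railEquiv hn hG), Nat.card_coe_set_eq]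
  refine (Nat.div_eq_of_eq_mul_right hG.pos (Nat.sub_eq_of_eq_add ?_)).symm
  zify
  linear_combination -hcount

end Heawood

/-- For odd `n ≥ 3`, the number of Heawood vectors of the circular ladder graph `CL_n`,
i.e. functions `σ : (ZMod n) × Bool → ZMod 3` with all values in `{1, 2}` satisfying the
propriety condition for each quadrilateral face and for the two `n`-gonal faces,
equals `(2 ^ n - 2) / 3`. -/
theorem card_heawood_circularLadder_odd (n : ℕ) [NeZero n] (hn : 3 ≤ n) (hpar : Odd n) :
    Nat.card {σ : ZMod n × Bool → ZMod 3 //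
      (∀ v, σ v = 1 ∨ σ v = 2) ∧
      (∀ i : ZMod n,
        σ (i, false) + σ (i, true) + σ (i + 1, true) + σ (i + 1, false) = 0) ∧
      (∑ i : ZMod n, σ (i, false)) = 0 ∧ (∑ i : ZMod n, σ (i, true)) = 0} =
    (2 ^ n - 2) / 3 := by
  simpa only [isHeawoodVector_zmod_three_iff, Nat.card_zmod] using
    card_heawood_circularLadder_odd_general (G := ZMod 3) hpar (by rw [Nat.card_zmod]; decide)
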